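/- Let A = Σ a_i X^i, B = Σ b_i X^i ∈ D[X] have degree d and valuation 0, let (S_i)_{−1 ≤ i ≤ d} be their sequence of symmetric subresultants, and suppose the pair (S_j, S_{j+1}) is (α,β)-defective. If j > 0, then lc(S_j)^α·S_j(0)^{β−1}·S_{j+α+β} = (−1)^{(α+β)α}·lc(S_{j+1})^α·tc(S_{j+1})^{β−1}·(S_{j+1}/X^α). If j = 0, then b_d^α·S_{α+β} = (−1)^{(α+β)α}·b_0^α·lc(S_1)^α·tc(S_1)^{β−1}·(S_1/X^α). -/

import Mathlib

open Polynomial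

/-- The `2j × 2j` square submatrix `Sylv_{j,ℓ}(A,B)` of the Sylvester-type matrix of `A` and `B`
(of formal degree `d`): rows are the coefficient vectors of `A, XA, …, X^{j-1}A, B, …, X^{j-1}B`,
keeping the columns of degrees `0, …, j-2`, the column of degree `j-1+ℓ`, and the columns of
degrees `d, …, d+j-1`. -/
noncomputable def sylvMat {R : Type*} [CommRing R] (A B : R[X]) (d j ℓ : ℕ) :
    Matrix (Fin (2 * j)) (Fin (2 * j)) R := fun r c =>
  (if (r : ℕ) < j then X ^ (r : ℕ) * A else X ^ ((r : ℕ) - j) * B).coeff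
    (if (c : ℕ) < j - 1 then (c : ℕ)
     else if (c : ℕ) = j - 1 then j - 1 + ℓ
     else d + ((c : ℕ) - j))

/-- The sequence of symmetric subresultants of `A` and `B` (of formal degree `d`):
`S_0 = B` and `S_j = ∑_{ℓ=0}^{d-j} det (Sylv_{j,ℓ}(A,B)) · X^ℓ` for `1 ≤ j`. -/
noncomputable def symSubres {R : Type*} [CommRing R] (A B : R[X]) (d j : ℕ) : R[X] :=
  if j = 0 then B
  else ∑ ℓ ∈ Finset.range (d - j + 1), C (sylvMat A B d j ℓ).det * X ^ ℓ

/-- The pair `(S_j, S_{j+1})` of symmetric subresultants of `A`, `B` (formal degree `d`) is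
`(α,β)`-defective: `v(S_j) = 0`, `deg S_j = d - j`, `v(S_{j+1}) = α`, `deg S_{j+1} = d - j - β`. -/
def IsDefective {R : Type*} [CommRing R] (A B : R[X]) (d j α β : ℕ) : Prop :=
  (symSubres A B d j).coeff 0 ≠ 0 ∧
  (symSubres A B d j).natDegree + j = d ∧
  symSubres A B d (j + 1) ≠ 0 ∧
  (symSubres A B d (j + 1)).natTrailingDegree = α ∧
  (symSubres A B d (j + 1)).natDegree + β + j = d

/-!
Write `s_j` for the product of the two extreme coefficients of `S_j` (and `s_0 = b_d`). The core is
the identity `sylvMinor S_{j+1} S_j (k+1) k = s_j ^ k * S_{j+k+1}`, which says that a minor of the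
Sylvester matrix of two consecutive symmetric subresultants yields all the following ones. It is
proved by a Euclid-like elimination: for `k = 1` it is a three-term recurrence expressing
`s_j X S_{j+2}` as a combination of `S_j` and `S_{j+1}`, and substituting this recurrence for `S_j`
in the rows of the minor moves from `j` to `j + 1`. The elimination divides by the `s_i`, which may
vanish for given `A` and `B`; so it is carried out with indeterminate coefficients over `ℤ`, where
they do not, and the identity is then specialized.

For a defective pair `S_{j+1} = X ^ α * Q`, the minor with `k + 1 = α + β` is evaluated in closed
form: the low columns expand along `X ^ α` and the high columns along the drop of degree, one row at
a time, until only a coefficient of `Q` is left. The sign comes from moving the rows of `S_{j+1}`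
past those of `S_j`.
-/

/-- The determinant of the `N × N` matrix with `(i, k)` entry the coefficient of degree `c k` of the
polynomial `r i`. Rows and columns are indexed by `ℕ`, of which only the indices below `N` matter;
this spares casts between the types `Fin N` in expansions and block arguments. -/
noncomputable def coeffDet {R : Type*} [CommRing R] (N : ℕ) (r : ℕ → R[X]) (c : ℕ → ℕ) : R :=
  Matrix.det (Matrix.of fun i k : Fin N => (r i).coeff (c k))

section CoeffDet

variable {R S : Type*} [CommRing R] [CommRing S] {N : ℕ} {r r' : ℕ → R[X]} {c c' : ℕ → ℕ}

lemma coeffDet_congr (hr : ∀ i < N, r i = r' i) (hc : ∀ k < N, c k = c' k) :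
    coeffDet N r c = coeffDet N r' c' := by
  unfold coeffDet
  congr 1
  ext i k
  simp [hr i i.2, hc k k.2]

lemma coeffDet_map (φ : R →+* S) : φ (coeffDet N r c) = coeffDet N (fun i => (r i).map φ) c := by
  unfold coeffDet
  rw [RingHom.map_det]
  congr 1
  ext i k
  simp

lemma coeffDet_X_mul :
    coeffDet N (fun i => X * r i) (fun k => c k + 1) = coeffDet N r c := by
  simp [coeffDet]

lemma coeffDet_succ_of_first_col (h : ∀ i, (r (i + 1)).coeff (c 0) = 0) :
    coeffDet (N + 1) r c =
      (r 0).coeff (c 0) * coeffDet N (fun i => r (i + 1)) (fun k => c (k + 1)) := by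
  unfold coeffDet
  rw [Matrix.det_succ_column_zero, Fin.sum_univ_succ, Finset.sum_eq_zero]
  · simp only [Fin.val_zero, pow_zero, one_mul, add_zero]
    rfl
  · simp [h]

lemma coeffDet_succ_of_last_col (h : ∀ i < N, (r i).coeff (c N) = 0) :
    coeffDet (N + 1) r c = (r N).coeff (c N) * coeffDet N r c := by
  unfold coeffDet
  rw [Matrix.det_succ_column _ (Fin.last N), Fin.sum_univ_castSucc, Finset.sum_eq_zero]
  · simp only [Fin.val_last, ← two_mul, pow_mul, neg_one_sq, one_pow, one_mul, zero_add,
      Fin.succAbove_last]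
    rfl
  · simp [h]

lemma coeffDet_eq_prod_mul_of_lowerTriangular {T : ℕ → ℕ → R}
    (hr : ∀ i < N, r' i = ∑ k ∈ Finset.range N, C (T i k) * r k)
    (hT : ∀ i k, i < k → T i k = 0) :
    coeffDet N r' c = (∏ i ∈ Finset.range N, T i i) * coeffDet N r c := by
  have hdet : (Matrix.of fun i k : Fin N => T i k).det = ∏ i ∈ Finset.range N, T i i := by
    rw [Matrix.det_of_isLowerTriangular, Finset.prod_range]
    · rfl
    · exact fun i k hik => hT _ _ hik
  unfold coeffDet
  rw [← hdet, ← Matrix.det_mul]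
  congr 1
  ext i k
  simp [Matrix.mul_apply, hr i i.2, Finset.sum_range]

lemma val_finRotate_pow (n t : ℕ) (i : Fin (n + 1)) :
    ((finRotate (n + 1) ^ t) i : ℕ) = (i + t) % (n + 1) := by
  induction t with
  | zero => simp [Nat.mod_eq_of_lt i.2]
  | succ t ih =>
    rw [pow_succ', Equiv.Perm.mul_apply, finRotate_apply, Fin.val_add, ih,
      Fin.val_one', Nat.mod_add_mod, Nat.add_mod_mod, add_assoc]

lemma coeffDet_rotate (t : ℕ) :
    coeffDet N (fun i => r ((i + t) % N)) c = ((-1) ^ (N - 1)) ^ t * coeffDet N r c := by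
  cases N with
  | zero => simp [coeffDet]
  | succ n =>
    have h := Matrix.det_permute (finRotate (n + 1) ^ t)
      (Matrix.of fun i k : Fin (n + 1) => (r i).coeff (c k))
    rw [map_pow, sign_finRotate] at h
    simp only [coeffDet, ← val_finRotate_pow]
    exact_mod_cast h

end CoeffDet

/-- The minor of the Sylvester matrix of `F` and `G` with rows
`F, X F, …, X ^ (p - 1) F, G, X G, …, X ^ (q - 1) G` and with the columns of degrees
`0, …, u - 1`, of degree `u + ℓ`, and of degrees `n, n + 1, …`. It covers both the coefficients of
symmetric subresultants and the determinants that eliminate between two of them. -/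
noncomputable def sylvMinor {R : Type*} [CommRing R] (F G : R[X]) (p q u n ℓ : ℕ) : R :=
  coeffDet (p + q) (fun i => if i < p then X ^ i * F else X ^ (i - p) * G)
    (fun k => if k < u then k else if k = u then u + ℓ else n + (k - (u + 1)))

section SylvMinor

variable {R S : Type*} [CommRing R] [CommRing S] {F G H : R[X]} {p q u n ℓ : ℕ}

lemma sylvMinor_map (φ : R →+* S) :
    φ (sylvMinor F G p q u n ℓ) = sylvMinor (F.map φ) (G.map φ) p q u n ℓ := by
  unfold sylvMinor
  rw [coeffDet_map]
  congr! 2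
  split_ifs <;> simp

lemma sylvMinor_one_zero : sylvMinor F G 1 0 0 n ℓ = F.coeff ℓ := by
  simp [sylvMinor, coeffDet]

lemma sylvMinor_zero_one : sylvMinor F G 0 1 0 n ℓ = G.coeff ℓ := by
  simp [sylvMinor, coeffDet]

lemma sylvMinor_one_one :
    sylvMinor F G 1 1 0 n ℓ = F.coeff ℓ * G.coeff n - F.coeff n * G.coeff ℓ := by
  simp [sylvMinor, coeffDet, Matrix.det_fin_two]

lemma sylvMinor_two_one (hF : F.coeff (n + 1) = 0) :
    sylvMinor F G 2 1 1 (n + 1) ℓ =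
      -(F.coeff 0 * F.coeff n) * G.coeff (ℓ + 1) + F.coeff 0 * G.coeff (n + 1) * F.coeff ℓ
        + F.coeff n * G.coeff 0 * F.coeff (ℓ + 1) := by
  have hdet : sylvMinor F G 2 1 1 (n + 1) ℓ =
      !![F.coeff 0, F.coeff (ℓ + 1), F.coeff (n + 1);
         0, F.coeff ℓ, F.coeff n;
         G.coeff 0, G.coeff (ℓ + 1), G.coeff (n + 1)].det := by
    unfold sylvMinor coeffDet
    congr 1
    ext i k
    fin_cases i <;> fin_cases k <;> simp [add_comm 1 ℓ]
  rw [hdet, hF, Matrix.det_fin_three]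
  simp only [Matrix.of_apply, Matrix.cons_val]
  ring

lemma sylvMinor_zero_right_congr (G' : R[X]) :
    sylvMinor F G p 0 u n ℓ = sylvMinor F G' p 0 u n ℓ :=
  coeffDet_congr (fun i hi => by simp only [if_pos (show i < p from hi)]) fun _ _ => rfl

lemma sylvMinor_swap :
    sylvMinor F G p q u n ℓ = (-1) ^ (p * q) * sylvMinor G F q p u n ℓ := by
  have hsign : ((-1 : R) ^ (q + p - 1)) ^ q = (-1) ^ (p * q) := by
    cases q with
    | zero => simp
    | succ q =>
      rw [← pow_mul, show (q + 1 + p - 1) * (q + 1) = q * (q + 1) + p * (q + 1) by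
        rw [← add_mul]; congr 1; omega, pow_add, (Nat.even_mul_succ_self q).neg_one_pow, one_mul]
  unfold sylvMinor
  rw [← hsign, ← coeffDet_rotate, add_comm p q]
  refine coeffDet_congr (fun i hi => ?_) fun _ _ => rfl
  by_cases hip : i < p
  · rw [Nat.mod_eq_of_lt (by omega), if_pos hip, if_neg (by omega), Nat.add_sub_cancel]
  · rw [Nat.mod_eq_sub_mod (by omega), Nat.mod_eq_of_lt (by omega), if_neg hip,
      if_pos (by omega), show i + q - (q + p) = i - p by omega]

lemma sylvMinor_X_mul_right :
    sylvMinor F (X * G) (p + 1) q (u + 1) (n + 1) ℓ = F.coeff 0 * sylvMinor F G p q u n ℓ := by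
  have hrow (i : ℕ) :
      (if i + 1 < p + 1 then X ^ (i + 1) * F else X ^ (i + 1 - (p + 1)) * (X * G)) =
        X * if i < p then X ^ i * F else X ^ (i - p) * G := by
    simp only [Nat.add_lt_add_iff_right, Nat.add_sub_add_right, mul_ite]
    split_ifs <;> ring
  unfold sylvMinor
  rw [add_right_comm p 1 q, coeffDet_succ_of_first_col]
  · simp only [Nat.zero_lt_succ, if_true, pow_zero, one_mul]
    congr 1
    refine (coeffDet_congr (fun i _ => hrow i) fun k _ => ?_).trans coeffDet_X_mul
    split_ifs <;> omega
  · intro i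
    rw [hrow, if_pos u.succ_pos, mul_coeff_zero, coeff_X_zero, zero_mul]

lemma sylvMinor_X_pow_mul_right (a : ℕ) :
    sylvMinor F (X ^ a * G) (p + a) q (u + a) (n + a) ℓ =
      F.coeff 0 ^ a * sylvMinor F G p q u n ℓ := by
  induction a with
  | zero => simp
  | succ a ih =>
    rw [pow_succ', mul_assoc, ← add_assoc, ← add_assoc, ← add_assoc, sylvMinor_X_mul_right, ih]
    ring

lemma sylvMinor_X_pow_mul_left (a : ℕ) :
    sylvMinor (X ^ a * F) G p (q + a) (u + a) (n + a) ℓ =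
      ((-1) ^ p * G.coeff 0) ^ a * sylvMinor F G p q u n ℓ := by
  rw [sylvMinor_swap, sylvMinor_X_pow_mul_right, sylvMinor_swap (F := G), mul_add, pow_add,
    mul_pow, ← pow_mul, mul_comm q p]
  linear_combination (G.coeff 0 ^ a * (-1) ^ (p * a) * sylvMinor F G p q u n ℓ) *
    (Even.neg_one_pow ⟨p * q, rfl⟩ : (-1 : R) ^ (p * q + p * q) = 1)

lemma coeff_X_pow_mul_eq_zero_of_degree_lt {e i m : ℕ} (hF : F.degree < e) (h : e + i ≤ m) :
    (X ^ i * F).coeff m = 0 := by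
  rw [coeff_X_pow_mul', if_pos (by omega), (degree_lt_iff_coeff_zero F e).1 hF _ (by omega)]

lemma degree_lt_succ_of_natDegree_le (hF : F.natDegree ≤ n) : F.degree < (n + 1 : ℕ) :=
  degree_le_natDegree.trans_lt (by exact_mod_cast Nat.lt_succ_of_le hF)

lemma sylvMinor_succ_right {e f : ℕ} (hF : F.degree < e) (hG : G.natDegree ≤ f)
    (hu : u < p + q) (hn : n + p = u + 1 + f) (he : e + p ≤ f + q + 1) :
    sylvMinor F G p (q + 1) u n ℓ = G.coeff f * sylvMinor F G p q u n ℓ := by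
  have hcol : (if p + q < u then p + q else if p + q = u then u + ℓ else n + (p + q - (u + 1))) =
      f + q := by
    rw [if_neg (by omega), if_neg (by omega)]
    omega
  unfold sylvMinor
  rw [← add_assoc, coeffDet_succ_of_last_col]
  · rw [hcol, if_neg (by omega), Nat.add_sub_cancel_left, coeff_X_pow_mul]
  · intro i hi
    rw [hcol]
    split_ifs with hip
    · exact coeff_X_pow_mul_eq_zero_of_degree_lt hF (by omega)
    · exact coeff_X_pow_mul_eq_zero_of_degree_lt (degree_lt_succ_of_natDegree_le hG) (by omega)

lemma sylvMinor_add_right {e f : ℕ} (b : ℕ) (hF : F.degree < e) (hG : G.natDegree ≤ f)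
    (hu : u < p + q) (hn : n + p = u + 1 + f) (he : e + p ≤ f + q + 1) :
    sylvMinor F G p (q + b) u n ℓ = G.coeff f ^ b * sylvMinor F G p q u n ℓ := by
  induction b with
  | zero => simp
  | succ b ih =>
    rw [← add_assoc, sylvMinor_succ_right hF hG (by omega) hn (by omega), ih]
    ring

lemma sylvMinor_add_left {e f : ℕ} (a : ℕ) (hF : F.natDegree ≤ f) (hG : G.degree < e)
    (hu : u < p + q) (hn : n + q = u + 1 + f) (he : e + q ≤ f + p + 1) :
    sylvMinor F G (p + a) q u n ℓ =
      ((-1) ^ q * F.coeff f) ^ a * sylvMinor F G p q u n ℓ := by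
  rw [sylvMinor_swap, sylvMinor_add_right a hG hF (by omega) hn he, sylvMinor_swap (F := G),
    add_mul, pow_add, mul_pow, ← pow_mul, mul_comm a q, mul_comm q p]
  linear_combination (F.coeff f ^ a * (-1) ^ (q * a) * sylvMinor F G p q u n ℓ) *
    (Even.neg_one_pow ⟨p * q, rfl⟩ : (-1 : R) ^ (p * q + p * q) = 1)

lemma X_pow_mul_mul_eq_sum {m : ℕ} (hm : m + H.natDegree < p) :
    X ^ m * (H * F) = ∑ k ∈ Finset.range p, C ((X ^ m * H).coeff k) * (X ^ k * F) := by
  have hdeg : (X ^ m * H).natDegree < p :=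
    (natDegree_mul_le.trans (Nat.add_le_add_right (natDegree_X_pow_le m) _)).trans_lt hm
  rw [← mul_assoc]
  conv_lhs => rw [as_sum_range_C_mul_X_pow' _ hdeg, Finset.sum_mul]
  simp only [mul_assoc]

lemma sylvMinor_C_mul_add_mul_right (a : R) (hH : H.natDegree + q ≤ p) :
    sylvMinor F (C a * G + H * F) p q u n ℓ = a ^ q * sylvMinor F G p q u n ℓ := by
  let T : ℕ → ℕ → R := fun i k =>
    if i < p then if k = i then 1 else 0
    else (if k = i then a else 0) + if k < p then (X ^ (i - p) * H).coeff k else 0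
  have hdiag : ∏ i ∈ Finset.range (p + q), T i i = a ^ q := by
    rw [Finset.prod_range_add, Finset.prod_eq_one fun i hi => by
      simp [T, Finset.mem_range.1 hi]]
    simp [T]
  rw [← hdiag]
  refine coeffDet_eq_prod_mul_of_lowerTriangular (fun i hi => ?_) fun i k hik => ?_
  · by_cases hip : i < p
    · simp only [T, if_pos hip, apply_ite C, C_1, C_0, ite_mul, one_mul, zero_mul,
        Finset.sum_ite_eq', Finset.mem_range, hi, if_true]
    · have hcomb : ∑ k ∈ Finset.range (p + q), C (if k < p then (X ^ (i - p) * H).coeff k else 0) *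
          (if k < p then X ^ k * F else X ^ (k - p) * G) = X ^ (i - p) * (H * F) := by
        rw [X_pow_mul_mul_eq_sum (p := p) (by omega), Finset.sum_range_add,
          Finset.sum_eq_zero (s := Finset.range q) (by simp), add_zero]
        exact Finset.sum_congr rfl fun k hk => by simp only [if_pos (Finset.mem_range.1 hk)]
      simp only [T, if_neg hip, C_add, add_mul, Finset.sum_add_distrib, hcomb]
      simp only [apply_ite C, C_0, ite_mul, zero_mul, Finset.sum_ite_eq', Finset.mem_range, hi,
        if_true, if_neg hip]
      ring
  · simp only [T]
    split_ifs <;> first | omega | simp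

lemma sylvMinor_C_mul_right (a : R) (hpq : q ≤ p) :
    sylvMinor F (C a * G) p q u n ℓ = a ^ q * sylvMinor F G p q u n ℓ := by
  simpa using sylvMinor_C_mul_add_mul_right (H := 0) a (by simpa using hpq)

lemma sylvMinor_C_mul_add_mul_left (a : R) (hH : H.natDegree + p ≤ q) :
    sylvMinor (C a * F + H * G) G p q u n ℓ = a ^ p * sylvMinor F G p q u n ℓ := by
  rw [sylvMinor_swap, sylvMinor_C_mul_add_mul_right a hH, sylvMinor_swap (F := F)]
  ring

lemma sylvMinor_eq_zero_of_le (hF : F.natDegree ≤ n) (hG : G.natDegree ≤ n) (hℓ : n ≤ u + ℓ) :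
    sylvMinor F G (u + 1) (u + 1) u n ℓ = 0 := by
  unfold sylvMinor coeffDet
  by_cases h : ℓ ≤ n
  · have hlt : ¬u + 1 + (u + ℓ - n) < u := by omega
    have hne : ¬u + 1 + (u + ℓ - n) = u := by omega
    have hcol : u + ℓ = n + (u + 1 + (u + ℓ - n) - (u + 1)) := by omega
    refine Matrix.det_zero_of_column_eq
      (i := ⟨u, by omega⟩) (j := ⟨u + 1 + (u + ℓ - n), by omega⟩) (Fin.ne_of_val_ne (Ne.symm hne))
      fun i => ?_
    simp only [Matrix.of_apply, lt_irrefl, if_false, if_true, hlt, hne, ← hcol]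
  · refine Matrix.det_eq_zero_of_column_eq_zero ⟨u, by omega⟩ fun i => ?_
    have hi := i.2
    simp only [Matrix.of_apply, lt_irrefl, if_false, if_true]
    split_ifs
    · exact coeff_X_pow_mul_eq_zero_of_degree_lt (degree_lt_succ_of_natDegree_le hF) (by omega)
    · exact coeff_X_pow_mul_eq_zero_of_degree_lt (degree_lt_succ_of_natDegree_le hG) (by omega)

lemma sylvMinor_X_pow_mul_eq {a b e : ℕ} (hF : F.natDegree ≤ e)
    (hG : G.natDegree ≤ e + a + b + 1) :
    sylvMinor (X ^ a * F) G (a + b + 1) (a + b) (a + b) (e + a + b + 1) ℓ =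
      (-1) ^ ((a + b + 1) * a) * (G.coeff 0 ^ a * G.coeff (e + a + b + 1) ^ b * F.coeff 0 ^ b *
        F.coeff e ^ a) * F.coeff ℓ := by
  calc sylvMinor (X ^ a * F) G (a + b + 1) (a + b) (a + b) (e + a + b + 1) ℓ
      = ((-1) ^ (a + b + 1) * G.coeff 0) ^ a *
          sylvMinor F G (a + b + 1) (0 + b) b (e + b + 1) ℓ := by
        rw [← sylvMinor_X_pow_mul_left]
        congr 1 <;> ring
    _ = ((-1) ^ (a + b + 1) * G.coeff 0) ^ a * (G.coeff (e + a + b + 1) ^ b *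
          sylvMinor F 0 (a + 1 + b) 0 (0 + b) (e + 1 + b) ℓ) := by
        rw [sylvMinor_add_right b (degree_lt_succ_of_natDegree_le hF) hG (by omega) (by omega)
          (by omega), sylvMinor_zero_right_congr 0]
        congr 3 <;> ring
    _ = ((-1) ^ (a + b + 1) * G.coeff 0) ^ a * (G.coeff (e + a + b + 1) ^ b *
          (F.coeff 0 ^ b * sylvMinor F 0 (1 + a) 0 0 (e + 1) ℓ)) := by
        rw [← sylvMinor_X_pow_mul_right, mul_zero, add_comm a 1]
    _ = ((-1) ^ (a + b + 1) * G.coeff 0) ^ a * (G.coeff (e + a + b + 1) ^ b *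
          (F.coeff 0 ^ b * (F.coeff e ^ a * F.coeff ℓ))) := by
        rw [sylvMinor_add_left (e := 0) a hF (by simp) (by omega) (by omega) (by omega),
          sylvMinor_one_zero, pow_zero, one_mul]
    _ = _ := by
        rw [mul_pow, ← pow_mul]
        ring

lemma sylvMinor_elimination_step {P Q T : R[X]} (s : R) (k : ℕ) (hQ : Q.natDegree ≤ n)
    (hT : T.degree < n)
    (h : C s * (X * T) = C (-(Q.coeff 0 * Q.coeff n)) * P +
      (C (Q.coeff 0 * P.coeff (n + 1)) * X + C (Q.coeff n * P.coeff 0)) * Q) :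
    (Q.coeff 0 * Q.coeff n) ^ (k + 1) * sylvMinor Q P (k + 2) (k + 1) (k + 1) (n + 1) ℓ =
      s ^ (k + 1) * (Q.coeff 0 * Q.coeff n) * sylvMinor T Q (k + 1) k k n ℓ := by
  have hsign : ((-1 : R) ^ (k + 1)) * (-1) ^ (k + 1) = 1 := by simp [← mul_pow]
  have hlin : (C (Q.coeff 0 * P.coeff (n + 1)) * X + C (Q.coeff n * P.coeff 0)).natDegree +
      (k + 1) ≤ 1 + (k + 1) := Nat.add_le_add_right natDegree_linear_le _
  have hswap : sylvMinor Q T k (k + 1) k n ℓ = sylvMinor T Q (k + 1) k k n ℓ := by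
    rw [sylvMinor_swap, (Nat.even_mul_succ_self k).neg_one_pow, one_mul]
  have key : (-(Q.coeff 0 * Q.coeff n)) ^ (k + 1) *
      sylvMinor Q P (k + 2) (k + 1) (k + 1) (n + 1) ℓ =
        s ^ (k + 1) * (Q.coeff 0 *
          ((-1) ^ (k + 1) * Q.coeff n * sylvMinor T Q (k + 1) k k n ℓ)) := by
    rw [← sylvMinor_C_mul_add_mul_right _ (hlin.trans (by omega)), ← h,
      sylvMinor_C_mul_right _ (by omega), sylvMinor_X_mul_right,
      sylvMinor_add_left 1 hQ hT (by omega) (by omega) (by omega), pow_one, hswap]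
  rw [neg_pow] at key
  linear_combination (-1) ^ (k + 1) * key + (s ^ (k + 1) * (Q.coeff 0 * Q.coeff n) *
    sylvMinor T Q (k + 1) k k n ℓ - (Q.coeff 0 * Q.coeff n) ^ (k + 1) *
      sylvMinor Q P (k + 2) (k + 1) (k + 1) (n + 1) ℓ) * hsign

end SylvMinor

section SymSubres

variable {R S : Type*} [CommRing R] [CommRing S] {A B : R[X]} {d j k ℓ : ℕ}

lemma symSubres_zero : symSubres A B d 0 = B := if_pos rfl

lemma det_sylvMat_succ :
    (sylvMat A B d (k + 1) ℓ).det = sylvMinor A B (k + 1) (k + 1) k d ℓ := by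
  rw [sylvMinor, ← two_mul]
  rfl

lemma symSubres_map (φ : R →+* S) :
    (symSubres A B d j).map φ = symSubres (A.map φ) (B.map φ) d j := by
  cases j with
  | zero => simp only [symSubres_zero]
  | succ k =>
    simp only [symSubres, if_neg k.succ_ne_zero, Polynomial.map_sum, Polynomial.map_mul, map_C,
      Polynomial.map_pow, map_X, det_sylvMat_succ, ← sylvMinor_map]

lemma coeff_symSubres_succ (hA : A.natDegree ≤ d) (hB : B.natDegree ≤ d) :
    (symSubres A B d (k + 1)).coeff ℓ = sylvMinor A B (k + 1) (k + 1) k d ℓ := by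
  simp only [symSubres, if_neg k.succ_ne_zero, finsetSum_coeff, coeff_C_mul_X_pow,
    Finset.sum_ite_eq, Finset.mem_range, det_sylvMat_succ]
  split_ifs with h
  · rfl
  · exact (sylvMinor_eq_zero_of_le hA hB (by omega)).symm

lemma coeff_symSubres_eq_zero (hA : A.natDegree ≤ d) (hB : B.natDegree ≤ d) (h : d < j + ℓ) :
    (symSubres A B d j).coeff ℓ = 0 := by
  cases j with
  | zero => rw [symSubres_zero, coeff_eq_zero_of_natDegree_lt (by omega)]
  | succ k => rw [coeff_symSubres_succ hA hB, sylvMinor_eq_zero_of_le hA hB (by omega)]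

lemma natDegree_symSubres_le (hA : A.natDegree ≤ d) (hB : B.natDegree ≤ d) :
    (symSubres A B d j).natDegree ≤ d - j :=
  natDegree_le_iff_coeff_eq_zero.2 fun _ h => coeff_symSubres_eq_zero hA hB (by omega)

lemma symSubres_one (hA : A.natDegree ≤ d) (hB : B.natDegree ≤ d) :
    symSubres A B d 1 = C (B.coeff d) * A - C (A.coeff d) * B := by
  ext ℓ
  rw [coeff_symSubres_succ hA hB, sylvMinor_one_one, coeff_sub, coeff_C_mul, coeff_C_mul, mul_comm]

lemma coeff_mul_symSubres_succ (hA : A.natDegree ≤ d) (hB : B.natDegree ≤ d) :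
    B.coeff d ^ (k + 1) * (symSubres A B d (k + 1)).coeff ℓ =
      B.coeff d * sylvMinor (symSubres A B d 1) B (k + 1) k k d ℓ := by
  have hS : symSubres A B d 1 = C (B.coeff d) * A + C (-A.coeff d) * B := by
    rw [symSubres_one hA hB, C_neg]
    ring
  have hdeg : (symSubres A B d 1).degree < d :=
    (degree_lt_iff_coeff_zero _ _).2 fun _ h => coeff_symSubres_eq_zero hA hB (by omega)
  rw [coeff_symSubres_succ hA hB, ← sylvMinor_C_mul_add_mul_left (H := C (-A.coeff d)) _ (by simp),
    ← hS, sylvMinor_succ_right hdeg hB (by omega) (by omega) (by omega)]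

/-- The factor relating the minor `sylvMinor S_{j+1} S_j` to the symmetric subresultants following
`S_{j+1}`: the product of the two extreme coefficients `S_j(0)` and `co_{d-j}(S_j)`, except that
`S_0 = B` contributes only `b_d`. -/
noncomputable def symSubresPivot (A B : R[X]) (d j : ℕ) : R :=
  if j = 0 then B.coeff d else (symSubres A B d j).coeff 0 * (symSubres A B d j).coeff (d - j)

lemma symSubresPivot_zero : symSubresPivot A B d 0 = B.coeff d := if_pos rfl

lemma symSubresPivot_of_pos (hj : 0 < j) : symSubresPivot A B d j =
    (symSubres A B d j).coeff 0 * (symSubres A B d j).coeff (d - j) :=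
  if_neg hj.ne'

lemma symSubresPivot_map (φ : R →+* S) :
    φ (symSubresPivot A B d j) = symSubresPivot (A.map φ) (B.map φ) d j := by
  unfold symSubresPivot
  split_ifs <;> simp [← symSubres_map]

end SymSubres

section GenericElimination

variable {R : Type*} [CommRing R] {A B : R[X]} {d j : ℕ}

lemma symSubres_three_term (hA : A.natDegree ≤ d) (hB : B.natDegree ≤ d) {n : ℕ}
    (hn : d = j + (n + 1))
    (h : ∀ ℓ, sylvMinor (symSubres A B d (j + 1)) (symSubres A B d j) 2 1 1 (n + 1) ℓ =
      symSubresPivot A B d j * (symSubres A B d (j + 2)).coeff ℓ) :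
    C (symSubresPivot A B d j) * (X * symSubres A B d (j + 2)) =
      C (-((symSubres A B d (j + 1)).coeff 0 * (symSubres A B d (j + 1)).coeff n)) *
          symSubres A B d j +
        (C ((symSubres A B d (j + 1)).coeff 0 * (symSubres A B d j).coeff (n + 1)) * X +
          C ((symSubres A B d (j + 1)).coeff n * (symSubres A B d j).coeff 0)) *
            symSubres A B d (j + 1) := by
  have hlead : (symSubres A B d (j + 1)).coeff (n + 1) = 0 :=
    coeff_symSubres_eq_zero hA hB (by omega)
  ext ℓ
  cases ℓ with
  | zero =>
    simp only [coeff_add, mul_coeff_zero, coeff_X_zero, coeff_C_zero]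
    ring
  | succ ℓ =>
    simp only [add_mul, mul_assoc, coeff_add, coeff_C_mul, coeff_X_mul, ← h,
      sylvMinor_two_one hlead]
    ring

lemma sylvMinor_symSubres_of_pivot_ne_zero [IsDomain R] (hA : A.natDegree ≤ d)
    (hB : B.natDegree ≤ d) (hj : j ≤ d) (hpivot : ∀ i ≤ j, symSubresPivot A B d i ≠ 0) (k ℓ : ℕ) :
    sylvMinor (symSubres A B d (j + 1)) (symSubres A B d j) (k + 1) k k (d - j) ℓ =
      symSubresPivot A B d j ^ k * (symSubres A B d (j + k + 1)).coeff ℓ := by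
  induction j generalizing k ℓ with
  | zero =>
    have hne := hpivot 0 le_rfl
    rw [symSubresPivot_zero] at hne ⊢
    refine mul_left_cancel₀ hne ?_
    rw [symSubres_zero, zero_add, zero_add, Nat.sub_zero, ← coeff_mul_symSubres_succ hA hB]
    ring
  | succ j ih =>
    obtain ⟨n, hn⟩ : ∃ n, d = j + (n + 1) := ⟨d - j - 1, by omega⟩
    have hdj : d - j = n + 1 := by omega
    have hdj' : d - (j + 1) = n := by omega
    specialize ih (by omega) fun i hi => hpivot i (by omega)
    rw [hdj] at ih
    have helim := sylvMinor_elimination_step (ℓ := ℓ) (symSubresPivot A B d j) k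
      ((natDegree_symSubres_le hA hB).trans_eq hdj')
      ((degree_lt_iff_coeff_zero _ _).2 fun _ h => coeff_symSubres_eq_zero hA hB (by omega))
      (symSubres_three_term hA hB hn fun ℓ => by simpa using ih 1 ℓ)
    have hne := hpivot (j + 1) le_rfl
    have hpiv := symSubresPivot_of_pos (A := A) (B := B) (d := d) j.succ_pos
    rw [hdj'] at hpiv ⊢
    rw [← hpiv, ih] at helim
    refine mul_left_cancel₀ (mul_ne_zero (pow_ne_zero (k + 1) (hpivot j j.le_succ)) hne) ?_
    rw [← helim, show j + 1 + k + 1 = j + (k + 1) + 1 by ring]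
    ring

lemma coeff_symSubres_X_pow_succ {m : ℕ} (i ℓ : ℕ) (hB : B.natDegree ≤ m) :
    (symSubres (X ^ (m + i + 1)) B (m + i + 1) (i + 1)).coeff ℓ =
      ((-1) ^ (i + 1) * B.coeff 0) ^ i * (-1) ^ (i + 1) * B.coeff ℓ := by
  calc (symSubres (X ^ (m + i + 1)) B (m + i + 1) (i + 1)).coeff ℓ
      = sylvMinor (X ^ i * X ^ (m + 1)) B (i + 1) (1 + i) (0 + i) (m + 1 + i) ℓ := by
        rw [coeff_symSubres_succ (natDegree_X_pow_le _) (by omega), ← pow_add]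
        congr 1 <;> ring
    _ = ((-1) ^ (i + 1) * B.coeff 0) ^ i *
          sylvMinor (X ^ (m + 1)) B (0 + (i + 1)) 1 0 (m + 1) ℓ := by
        rw [sylvMinor_X_pow_mul_left, zero_add]
    _ = _ := by
        rw [sylvMinor_add_left (i + 1) (natDegree_X_pow_le (m + 1))
          (degree_lt_succ_of_natDegree_le hB) (by omega) (by omega) (by omega), sylvMinor_zero_one]
        simp [mul_assoc]

lemma symSubresPivot_X_pow_ne_zero (hj : j ≤ d) :
    symSubresPivot (X ^ d : ℤ[X]) (1 + X ^ (d - j)) d j ≠ 0 := by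
  have hcoeff (m : ℕ) :
      (1 + X ^ m : ℤ[X]).coeff 0 ≠ 0 ∧ (1 + X ^ m : ℤ[X]).coeff m ≠ 0 := by
    simp only [coeff_add, coeff_one, coeff_X_pow, if_true]
    constructor <;> split_ifs <;> norm_num
  obtain ⟨m, rfl⟩ := Nat.exists_eq_add_of_le' hj
  rw [Nat.add_sub_cancel]
  cases j with
  | zero => exact symSubresPivot_zero.trans_ne (hcoeff m).2
  | succ i =>
    have hdeg : (1 + X ^ m : ℤ[X]).natDegree ≤ m :=
      natDegree_add_le_of_degree_le (by simp) (natDegree_X_pow_le m)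
    rw [symSubresPivot_of_pos i.succ_pos, Nat.add_sub_cancel, ← add_assoc,
      coeff_symSubres_X_pow_succ i _ hdeg, coeff_symSubres_X_pow_succ i _ hdeg]
    simp [-coeff_add, hcoeff m]

/-- Two polynomials of formal degree `d`, indexed by `Bool`, with independent indeterminate
coefficients over `ℤ`. Every pair of polynomials of degree at most `d` is a specialization of
them. -/
noncomputable def genericPoly (d : ℕ) (b : Bool) : (MvPolynomial (Bool × ℕ) ℤ)[X] :=
  ∑ i ∈ Finset.range (d + 1), C (MvPolynomial.X (b, i)) * X ^ i

lemma natDegree_genericPoly_le (b : Bool) : (genericPoly d b).natDegree ≤ d :=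
  natDegree_sum_le_of_forall_le _ _ fun i hi =>
    (natDegree_C_mul_X_pow_le _ i).trans (Nat.lt_succ_iff.1 (Finset.mem_range.1 hi))

lemma exists_map_genericPoly_eq (hA : A.natDegree ≤ d) (hB : B.natDegree ≤ d) :
    ∃ φ : MvPolynomial (Bool × ℕ) ℤ →+* R,
      (genericPoly d true).map φ = A ∧ (genericPoly d false).map φ = B := by
  let φ := MvPolynomial.eval₂Hom (Int.castRingHom R)
    fun x : Bool × ℕ => cond x.1 (A.coeff x.2) (B.coeff x.2)
  refine ⟨φ, ?_, ?_⟩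
  · rw [as_sum_range_C_mul_X_pow' A (Nat.lt_succ_of_le hA)]
    simp [genericPoly, Polynomial.map_sum, φ]
  · rw [as_sum_range_C_mul_X_pow' B (Nat.lt_succ_of_le hB)]
    simp [genericPoly, Polynomial.map_sum, φ]

lemma symSubresPivot_genericPoly_ne_zero (hj : j ≤ d) :
    symSubresPivot (genericPoly d true) (genericPoly d false) d j ≠ 0 := by
  obtain ⟨φ, hA, hB⟩ := exists_map_genericPoly_eq (A := (X ^ d : ℤ[X])) (B := 1 + X ^ (d - j))
    (natDegree_X_pow_le d)
    (natDegree_add_le_of_degree_le (by simp) ((natDegree_X_pow_le _).trans (d.sub_le j)))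
  refine fun h => symSubresPivot_X_pow_ne_zero hj ?_
  rw [← hA, ← hB, ← symSubresPivot_map, h, map_zero]

theorem sylvMinor_symSubres (hA : A.natDegree ≤ d) (hB : B.natDegree ≤ d) (hj : j ≤ d) (k ℓ : ℕ) :
    sylvMinor (symSubres A B d (j + 1)) (symSubres A B d j) (k + 1) k k (d - j) ℓ =
      symSubresPivot A B d j ^ k * (symSubres A B d (j + k + 1)).coeff ℓ := by
  obtain ⟨φ, rfl, rfl⟩ := exists_map_genericPoly_eq hA hB
  simp only [← symSubres_map, ← sylvMinor_map, ← symSubresPivot_map, coeff_map]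
  rw [sylvMinor_symSubres_of_pivot_ne_zero (natDegree_genericPoly_le _)
    (natDegree_genericPoly_le _) hj fun i hi => symSubresPivot_genericPoly_ne_zero (hi.trans hj),
    map_mul, map_pow]

end GenericElimination

section Jump

variable {R : Type*} [CommRing R] {A B : R[X]} {d j : ℕ}

theorem symSubres_jump_of_eq_X_pow_mul (hA : A.natDegree ≤ d) (hB : B.natDegree ≤ d) {a b e : ℕ}
    {Q : R[X]} (hS : symSubres A B d (j + 1) = X ^ a * Q) (hQ : Q.natDegree ≤ e)
    (hd : d = j + (e + a + b + 1)) :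
    C (symSubresPivot A B d j ^ (a + b)) * symSubres A B d (j + (a + b) + 1) =
      C ((-1) ^ ((a + b + 1) * a) * ((symSubres A B d j).coeff 0 ^ a *
        (symSubres A B d j).coeff (d - j) ^ b * Q.coeff 0 ^ b * Q.coeff e ^ a)) * Q := by
  have hdj : d - j = e + a + b + 1 := by omega
  ext ℓ
  rw [coeff_C_mul, coeff_C_mul, ← sylvMinor_symSubres hA hB (by omega), hS, hdj,
    sylvMinor_X_pow_mul_eq hQ ((natDegree_symSubres_le hA hB).trans_eq hdj)]

variable {α β : ℕ}

lemma X_pow_natTrailingDegree_mul_divByMonic (P : R[X]) :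
    X ^ P.natTrailingDegree * (P /ₘ X ^ P.natTrailingDegree) = P := by
  have hdvd : X ^ P.natTrailingDegree ∣ P :=
    X_pow_dvd_iff.2 fun _ h => coeff_eq_zero_of_lt_natTrailingDegree h
  have hmod := (modByMonic_eq_zero_iff_dvd (monic_X_pow P.natTrailingDegree)).2 hdvd
  simpa only [hmod, zero_add] using modByMonic_add_div P (X ^ P.natTrailingDegree)

lemma IsDefective.one_le_right (hdef : IsDefective A B d j α β) (hA : A.natDegree ≤ d)
    (hB : B.natDegree ≤ d) : 1 ≤ β := by
  obtain ⟨-, -, hS, -, hdeg⟩ := hdef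
  by_contra! hβ
  exact hS (leadingCoeff_eq_zero.1 (coeff_symSubres_eq_zero hA hB (by omega)))

lemma IsDefective.symSubres_jump (hdef : IsDefective A B d j α β) (hA : A.natDegree ≤ d)
    (hB : B.natDegree ≤ d) :
    C (symSubresPivot A B d j ^ (α + (β - 1))) * symSubres A B d (j + α + β) =
      C ((-1) ^ ((α + β) * α) * ((symSubres A B d j).coeff 0 ^ α *
        (symSubres A B d j).leadingCoeff ^ (β - 1) *
          (symSubres A B d (j + 1)).trailingCoeff ^ (β - 1) *
            (symSubres A B d (j + 1)).leadingCoeff ^ α)) * (symSubres A B d (j + 1) /ₘ X ^ α) := by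
  obtain ⟨b, rfl⟩ := Nat.exists_eq_add_of_le' (hdef.one_le_right hA hB)
  obtain ⟨-, hdeg, hS, rfl, hdegS⟩ := hdef
  set P := symSubres A B d (j + 1)
  set Q := P /ₘ X ^ P.natTrailingDegree
  have hP : X ^ P.natTrailingDegree * Q = P := X_pow_natTrailingDegree_mul_divByMonic P
  have htc : Q.coeff 0 = P.trailingCoeff := by
    rw [trailingCoeff, ← coeff_X_pow_mul Q P.natTrailingDegree 0, hP, zero_add]
  have hlc : Q.leadingCoeff = P.leadingCoeff := by
    rw [← leadingCoeff_monic_mul (monic_X_pow P.natTrailingDegree), hP]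
  have hQ : Q ≠ 0 := right_ne_zero_of_mul (hP.trans_ne hS)
  have hdegP : P.natTrailingDegree + Q.natDegree = P.natDegree := by
    nontriviality R
    have h := (monic_X_pow P.natTrailingDegree).natDegree_mul' hQ
    rw [hP, natDegree_X_pow] at h
    exact h.symm
  have hjump := symSubres_jump_of_eq_X_pow_mul (b := b) hA hB hP.symm le_rfl (by omega)
  rw [← hlc, ← htc, leadingCoeff, show (symSubres A B d j).natDegree = d - j by omega,
    Nat.add_sub_cancel, ← add_assoc _ b 1, ← add_assoc _ b 1, add_assoc j _ b]
  exact hjump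

end Jump

theorem structure_theorem_jump_general {R : Type*} [CommRing R] [IsDomain R] (A B : R[X])
    (d j α β : ℕ) (hA : A.natDegree ≤ d) (hB : B.natDegree ≤ d)
    (hdef : IsDefective A B d j α β) :
    (0 < j →
      C ((symSubres A B d j).leadingCoeff ^ α * ((symSubres A B d j).coeff 0) ^ (β - 1)) *
          symSubres A B d (j + α + β) =
        C ((-1) ^ ((α + β) * α) * (symSubres A B d (j + 1)).leadingCoeff ^ α *
            (symSubres A B d (j + 1)).trailingCoeff ^ (β - 1)) *
          (symSubres A B d (j + 1) /ₘ X ^ α)) ∧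
    (j = 0 →
      C (B.coeff d ^ α) * symSubres A B d (α + β) =
        C ((-1) ^ ((α + β) * α) * (B.coeff 0) ^ α *
            (symSubres A B d 1).leadingCoeff ^ α *
            (symSubres A B d 1).trailingCoeff ^ (β - 1)) *
          (symSubres A B d 1 /ₘ X ^ α)) := by
  have hjump := hdef.symSubres_jump hA hB
  obtain ⟨hval, hdeg, -⟩ := hdef
  have hlc : (symSubres A B d j).leadingCoeff = (symSubres A B d j).coeff (d - j) := by
    rw [leadingCoeff, show (symSubres A B d j).natDegree = d - j by omega]
  have hlc_ne : (symSubres A B d j).leadingCoeff ≠ 0 :=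
    leadingCoeff_ne_zero.2 fun h => hval (by rw [h, coeff_zero])
  constructor
  · intro hj
    rw [symSubresPivot_of_pos hj, ← hlc] at hjump
    refine mul_left_cancel₀
      (C_ne_zero.2 (mul_ne_zero (pow_ne_zero α hval) (pow_ne_zero (β - 1) hlc_ne))) ?_
    simp only [C_mul, C_pow] at hjump ⊢
    linear_combination hjump
  · rintro rfl
    rw [symSubresPivot_zero] at hjump
    rw [Nat.sub_zero] at hlc
    simp only [symSubres_zero, zero_add] at hjump hlc hlc_ne
    rw [← hlc] at hjump ⊢
    refine mul_left_cancel₀ (C_ne_zero.2 (pow_ne_zero (β - 1) hlc_ne)) ?_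
    simp only [C_mul, C_pow] at hjump ⊢
    linear_combination hjump

/-- Structure theorem, part 2: if `(S_j, S_{j+1})` is `(α,β)`-defective, then
`lc(S_j)^α · S_j(0)^{β-1} · S_{j+α+β} =
  (-1)^{(α+β)α} · lc(S_{j+1})^α · tc(S_{j+1})^{β-1} · (S_{j+1}/X^α)` when `j > 0`, and
`b_d^α · S_{α+β} = (-1)^{(α+β)α} · b_0^α · lc(S_1)^α · tc(S_1)^{β-1} · (S_1/X^α)`
when `j = 0`. -/
theorem structure_theorem_jump (D : Subring ℂ) (A B : Polynomial D) (d j α β : ℕ)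
    (hAdeg : A.degree = (d : ℕ)) (hBdeg : B.degree = (d : ℕ))
    (hAval : A.coeff 0 ≠ 0) (hBval : B.coeff 0 ≠ 0)
    (hdef : IsDefective A B d j α β) :
    (0 < j →
      C ((symSubres A B d j).leadingCoeff ^ α * ((symSubres A B d j).coeff 0) ^ (β - 1)) *
          symSubres A B d (j + α + β) =
        C ((-1 : D) ^ ((α + β) * α) * (symSubres A B d (j + 1)).leadingCoeff ^ α *
            (symSubres A B d (j + 1)).trailingCoeff ^ (β - 1)) *
          (symSubres A B d (j + 1) /ₘ X ^ α)) ∧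
    (j = 0 →
      C (B.coeff d ^ α) * symSubres A B d (α + β) =
        C ((-1 : D) ^ ((α + β) * α) * (B.coeff 0) ^ α *
            (symSubres A B d 1).leadingCoeff ^ α *
            (symSubres A B d 1).trailingCoeff ^ (β - 1)) *
          (symSubres A B d 1 /ₘ X ^ α)) := by
  exact structure_theorem_jump_general A B d j α β (natDegree_le_of_degree_le hAdeg.le)
    (natDegree_le_of_degree_le hBdeg.le) hdef
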